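/- For all integers d≥1 and n≥1, the following identity holds: [(2^{n−1}−1)d² − (2^{n−1}−2)d] + ∑_{m=1}^{n−1} [2^{n−m−1}d² − (2^{n−m−1}−1)d] · Z_n(m) = (d(nd−n+d+1)/2) · C_n − d(d−1). (This expresses that the cardinality of the spanning set S_{d,n} equals the dimension of the Yokonuma–Temperley–Lieb algebra YTL_{d,n}(u).) -/

import Mathlib

/-- The set 𝔗ₙ, encoded as lists of pairs `(i_j, k_j)`:
entries satisfy `1 ≤ i_j - k_j` (i.e. `k_j < i_j`) and `i_j ≤ n-1` (i.e. `i_j + 1 ≤ n`),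
the `i_j` are strictly increasing, and the `i_j - k_j` are strictly increasing. -/
def IsTT (n : ℕ) (l : List (ℕ × ℕ)) : Prop :=
  (∀ p ∈ l, p.2 < p.1 ∧ p.1 + 1 ≤ n) ∧
  List.Chain' (· < ·) (l.map Prod.fst) ∧
  List.Chain' (· < ·) (l.map (fun p => p.1 - p.2))

/-- The set of integers covered by the intervals `[i_j - k_j, i_j]`. -/
def cov (l : List (ℕ × ℕ)) : Finset ℕ :=
  l.foldr (fun p s => Finset.Icc (p.1 - p.2) p.1 ∪ s) ∅

/-- The weight of an element of 𝔗ₙ. -/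
def wt (l : List (ℕ × ℕ)) : ℕ := (cov l).card

/-- `Z n m` is the number of elements of 𝔗ₙ of weight `m`. -/
noncomputable def Z (n m : ℕ) : ℕ :=
  Nat.card {l : List (ℕ × ℕ) // IsTT n l ∧ wt l = m}

/-- `IsTail n a i l` says that `l` can be appended to an element of 𝔗ₙ whose last interval is
`[a, i]`. -/
def IsTail (n a i : ℕ) (l : List (ℕ × ℕ)) : Prop :=
  (∀ p ∈ l, p.2 < p.1 ∧ p.1 < n ∧ i < p.1 ∧ a < p.1 - p.2) ∧
  l.Pairwise fun p q => p.1 < q.1 ∧ p.1 - p.2 < q.1 - q.2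

/-- The set of tails after an interval `[a, i]`. -/
def tails (n a i : ℕ) : Set (List (ℕ × ℕ)) := {l | IsTail n a i l}

/-- The tails after `[a, i]` whose first interval starts at `a + 1`. -/
def adjacentTails (n a i : ℕ) : Set (List (ℕ × ℕ)) := tails n a i \ tails n (a + 1) i

/-- The number of integers in `(i, n - 1]` not covered by `l`. -/
def gaps (n i : ℕ) (l : List (ℕ × ℕ)) : ℕ := (Finset.Ioc i (n - 1) \ cov l).card

/-- The generating function of the tails after `[a, i]` by number of gaps, evaluated at `x`. -/
noncomputable def tailSum (x : ℚ) (n a i : ℕ) : ℚ := ∑ᶠ l ∈ tails n a i, x ^ gaps n i l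

/-- The part of `tailSum` coming from `adjacentTails`. -/
noncomputable def adjacentSum (x : ℚ) (n a i : ℕ) : ℚ :=
  ∑ᶠ l ∈ adjacentTails n a i, x ^ gaps n i l

lemma cov_cons (p : ℕ × ℕ) (l : List (ℕ × ℕ)) :
    cov (p :: l) = Finset.Icc (p.1 - p.2) p.1 ∪ cov l := rfl

lemma mem_cov {l : List (ℕ × ℕ)} {t : ℕ} :
    t ∈ cov l ↔ ∃ p ∈ l, p.1 - p.2 ≤ t ∧ t ≤ p.1 := by
  induction l with
  | nil => simp [cov]
  | cons p l ih => simp [cov_cons, ih]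

lemma isTail_nil (n a i : ℕ) : IsTail n a i [] := by simp [IsTail]

lemma isTail_cons {n a i : ℕ} {p : ℕ × ℕ} {l : List (ℕ × ℕ)} :
    IsTail n a i (p :: l) ↔
      (p.2 < p.1 ∧ p.1 < n ∧ i < p.1 ∧ a < p.1 - p.2) ∧ IsTail n (p.1 - p.2) p.1 l := by
  simp only [IsTail, List.forall_mem_cons, List.pairwise_cons]
  constructor
  · rintro ⟨⟨hp, hl⟩, hpl, hc⟩
    exact ⟨hp, fun q hq => ⟨(hl q hq).1, (hl q hq).2.1, hpl q hq⟩, hc⟩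
  · rintro ⟨hp, hl, hc⟩
    refine ⟨⟨hp, fun q hq => ?_⟩, fun q hq => (hl q hq).2.2, hc⟩
    have := hl q hq
    omega

lemma isTT_iff_isTail {n : ℕ} {l : List (ℕ × ℕ)} : IsTT n l ↔ IsTail n 0 0 l := by
  have hchain (f : ℕ × ℕ → ℕ) :
      List.IsChain (· < ·) (l.map f) ↔ l.Pairwise fun p q => f p < f q := by
    rw [List.isChain_iff_pairwise, List.pairwise_map]
  refine and_congr (forall₂_congr fun p _ => ?_) ?_
  · omega
  · exact (and_congr (hchain _) (hchain _)).trans List.pairwise_and_iff.symm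

lemma finite_tails (n a i : ℕ) : (tails n a i).Finite := by
  induction h : n - i using Nat.strong_induction_on generalizing a i with
  | _ r ih =>
    subst h
    refine (((Set.finite_singleton []).union
      (((Set.finite_Ioo i n).prod (Set.finite_Iio n)).biUnion
        (t := fun p => List.cons p '' tails n (p.1 - p.2) p.1) fun p hp =>
          (ih (n - p.1) ?_ _ _ rfl).image _))).subset ?_
    · simp only [Set.mem_prod, Set.mem_Ioo] at hp
      omega
    · rintro (_ | ⟨p, l⟩) h
      · simp
      · have h := isTail_cons.1 h
        refine Or.inr (Set.mem_biUnion (x := p) ?_ ⟨l, h.2, rfl⟩)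
        simp only [Set.mem_prod, Set.mem_Ioo, Set.mem_Iio]
        omega

lemma tails_succ_subset (n a i : ℕ) : tails n (a + 1) i ⊆ tails n a i := by
  intro l h
  refine ⟨fun p hp => ?_, h.2⟩
  have := h.1 p hp
  omega

lemma finite_adjacentTails (n a i : ℕ) : (adjacentTails n a i).Finite :=
  (finite_tails n a i).subset Set.sdiff_subset

lemma cons_mem_adjacentTails {n a i : ℕ} {p : ℕ × ℕ} {l : List (ℕ × ℕ)} :
    p :: l ∈ adjacentTails n a i ↔
      p.2 < p.1 ∧ p.1 < n ∧ i < p.1 ∧ p.1 - p.2 = a + 1 ∧ l ∈ tails n (a + 1) p.1 := by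
  simp only [adjacentTails, tails, Set.mem_sdiff, Set.mem_ofPred_eq, isTail_cons]
  constructor
  · rintro ⟨⟨h, hl⟩, h'⟩
    have : p.1 - p.2 = a + 1 := by
      by_contra hne
      exact h' ⟨by omega, hl⟩
    exact ⟨h.1, h.2.1, h.2.2.1, this, this ▸ hl⟩
  · rintro ⟨h1, h2, h3, h4, h5⟩
    exact ⟨⟨⟨h1, h2, h3, by omega⟩, h4 ▸ h5⟩, fun h => by omega⟩

lemma nil_notMem_adjacentTails (n a i : ℕ) : [] ∉ adjacentTails n a i :=
  fun h => h.2 (isTail_nil _ _ _)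

lemma adjacentTails_eq_union {n a i : ℕ} (hai : a ≤ i) (hin : i + 1 < n) :
    adjacentTails n a i =
      adjacentTails n a (i + 1) ∪ List.cons (i + 1, i - a) '' tails n (a + 1) (i + 1) := by
  ext l
  rcases l with _ | ⟨⟨u, k⟩, l⟩
  · simp [nil_notMem_adjacentTails]
  · simp only [Set.mem_union, cons_mem_adjacentTails, Set.mem_image, List.cons.injEq,
      Prod.mk.injEq]
    constructor
    · rintro ⟨h1, h2, h3, h4, h5⟩
      rcases Nat.lt_or_ge (i + 1) u with h | h
      · exact Or.inl ⟨h1, h2, h, h4, h5⟩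
      · obtain rfl : u = i + 1 := by omega
        exact Or.inr ⟨l, h5, ⟨rfl, by omega⟩, rfl⟩
    · rintro (⟨h1, h2, h3, h4, h5⟩ | ⟨l', h, ⟨rfl, rfl⟩, rfl⟩)
      · exact ⟨h1, h2, by omega, h4, h5⟩
      · exact ⟨by omega, hin, by omega, by omega, h⟩

lemma gaps_of_mem_adjacentTails {n a i : ℕ} (hai : a ≤ i) {l : List (ℕ × ℕ)}
    (hl : l ∈ adjacentTails n a (i + 1)) : gaps n i l = gaps n (i + 1) l := by
  rcases l with _ | ⟨p, l⟩
  · exact absurd hl (nil_notMem_adjacentTails _ _ _)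
  · have h := cons_mem_adjacentTails.1 hl
    unfold gaps
    congr 1
    ext t
    simp only [cov_cons, Finset.mem_sdiff, Finset.mem_Ioc, Finset.mem_union, Finset.mem_Icc]
    constructor
    · rintro ⟨h1, h2⟩
      exact ⟨by omega, h2⟩
    · rintro ⟨h1, h2⟩
      exact ⟨by omega, h2⟩

lemma gaps_cons_succ {n a i : ℕ} (hai : a ≤ i) (l : List (ℕ × ℕ)) :
    gaps n i ((i + 1, i - a) :: l) = gaps n (i + 1) l := by
  unfold gaps
  congr 1
  ext t
  simp only [cov_cons, Finset.mem_sdiff, Finset.mem_Ioc, Finset.mem_union, Finset.mem_Icc]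
  by_cases ht : t ∈ cov l
  · simp [ht]
  · simp only [ht, or_false, not_false_eq_true, and_true]
    omega

lemma tailSum_eq_add_adjacentSum (x : ℚ) (n a i : ℕ) :
    tailSum x n a i = ∑ᶠ l ∈ tails n (a + 1) i, x ^ gaps n i l + adjacentSum x n a i := by
  unfold tailSum adjacentSum adjacentTails
  rw [← finsum_mem_union Set.disjoint_sdiff_right (finite_tails _ _ _)
    (finite_adjacentTails _ _ _), Set.union_sdiff_cancel (tails_succ_subset _ _ _)]

lemma adjacentSum_succ (x : ℚ) {n a i : ℕ} (hai : a ≤ i) (hin : i + 1 < n) :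
    adjacentSum x n a i = adjacentSum x n a (i + 1) + tailSum x n (a + 1) (i + 1) := by
  unfold adjacentSum tailSum
  rw [adjacentTails_eq_union hai hin, finsum_mem_union _ (finite_adjacentTails _ _ _)
    ((finite_tails _ _ _).image _), finsum_mem_image (List.cons_injective.injOn)]
  · congr 1
    · exact finsum_mem_congr rfl fun l hl => by rw [gaps_of_mem_adjacentTails hai hl]
    · exact finsum_mem_congr rfl fun l _ => by rw [gaps_cons_succ hai]
  · rw [Set.disjoint_left]
    rintro _ h ⟨l, -, rfl⟩
    exact absurd (cons_mem_adjacentTails.1 h).2.2.1 (lt_irrefl _)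

lemma tailSum_recurrence (x : ℚ) {n a i : ℕ} (hai : a ≤ i) (hin : i + 1 < n) :
    tailSum x n a i = tailSum x n (a + 1) i + tailSum x n a (i + 1) := by
  rw [tailSum_eq_add_adjacentSum, tailSum_eq_add_adjacentSum x n a (i + 1),
    adjacentSum_succ x hai hin]
  unfold tailSum
  ring

lemma tailSum_succ_self (x : ℚ) {n i : ℕ} (hin : i + 1 < n) :
    tailSum x n (i + 1) i = x * tailSum x n (i + 1) (i + 1) := by
  unfold tailSum
  rw [mul_finsum_mem' _ _ (finite_tails _ _ _)]
  refine finsum_mem_congr ?_ fun l hl => ?_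
  · ext l
    refine and_congr (forall₂_congr fun p _ => ?_) Iff.rfl
    omega
  · rw [← pow_succ']
    congr 1
    have : Finset.Ioc i (n - 1) \ cov l = insert (i + 1) (Finset.Ioc (i + 1) (n - 1) \ cov l) := by
      have hi : i + 1 ∉ cov l := by
        rw [mem_cov]
        rintro ⟨p, hp, h⟩
        have := hl.1 p hp
        omega
      ext t
      simp only [Finset.mem_sdiff, Finset.mem_Ioc, Finset.mem_insert]
      constructor
      · rintro ⟨h1, h2⟩
        by_cases h : t = i + 1
        · exact Or.inl h
        · exact Or.inr ⟨by omega, h2⟩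
      · rintro (rfl | ⟨h1, h2⟩)
        · exact ⟨by omega, hi⟩
        · exact ⟨by omega, h2⟩
    unfold gaps
    rw [this, Finset.card_insert_of_notMem (by simp)]

lemma tailSum_last (x : ℚ) (a i : ℕ) : tailSum x (i + 1) a i = 1 := by
  have : tails (i + 1) a i = {[]} := by
    ext l
    rcases l with _ | ⟨p, l⟩
    · simp [tails, isTail_nil]
    · simp only [tails, Set.mem_ofPred_eq, isTail_cons, Set.mem_singleton_iff, reduceCtorEq,
        iff_false]
      omega
  simp [tailSum, this, gaps]

/-- The recurrences of `tailSum` determine it. -/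
lemma tailSum_eq_of_recurrence {x : ℚ} {K : ℕ → ℕ → ℚ} (h0 : ∀ s, K s 0 = 1)
    (h1 : ∀ r, K 0 (r + 1) = x * K 0 r + K 1 r)
    (h2 : ∀ s r, K (s + 1) (r + 1) = K s (r + 1) + K (s + 2) r) (r s a : ℕ) :
    tailSum x (a + s + r + 1) a (a + s) = K s r := by
  induction r generalizing s a with
  | zero => rw [Nat.add_zero, tailSum_last, h0]
  | succ r ihr =>
    induction s generalizing a with
    | zero =>
      rw [tailSum_recurrence x (by omega) (by omega), add_zero a,
        tailSum_succ_self x (by omega), h1, ← ihr 0 (a + 1), ← ihr 1 a]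
      congr 3 <;> ring
    | succ s ihs =>
      rw [tailSum_recurrence x (by omega) (by omega), h2, ← ihs (a + 1), ← ihr (s + 2) a]
      congr 2 <;> ring

lemma tailSum_two (r : ℕ) : tailSum 2 (r + 1) 0 0 = (2 * r + 1).choose r := by
  have := tailSum_eq_of_recurrence (x := 2) (K := fun s r => ((2 * r + s + 1).choose r : ℚ))
    (by simp) ?_ ?_ r 0 0
  · simpa using this
  · intro r
    have h1 : (2 * r + 3).choose (r + 1) = (2 * r + 2).choose r + (2 * r + 2).choose (r + 1) :=
      Nat.choose_succ_succ _ _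
    have h2 : (2 * r + 2).choose (r + 1) = (2 * r + 1).choose r + (2 * r + 1).choose (r + 1) :=
      Nat.choose_succ_succ _ _
    have h3 := Nat.choose_symm_half r
    show ((2 * r + 3).choose (r + 1) : ℚ)
      = 2 * ((2 * r + 1).choose r : ℚ) + ((2 * r + 2).choose r : ℚ)
    rw [h1, h2, h3]
    push_cast
    ring
  · intro s r
    have h : (2 * r + s + 4).choose (r + 1)
        = (2 * r + s + 3).choose r + (2 * r + s + 3).choose (r + 1) := Nat.choose_succ_succ _ _
    show ((2 * (r + 1) + (s + 1) + 1).choose (r + 1) : ℚ)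
      = ((2 * (r + 1) + s + 1).choose (r + 1) : ℚ) + ((2 * r + (s + 2) + 1).choose r : ℚ)
    rw [show 2 * (r + 1) + (s + 1) + 1 = 2 * r + s + 4 by ring,
      show 2 * (r + 1) + s + 1 = 2 * r + s + 3 by ring,
      show 2 * r + (s + 2) + 1 = 2 * r + s + 3 by ring, h]
    push_cast
    ring

/-- Ballot numbers as differences of adjacent binomial coefficients. -/
def ballot : ℕ → ℕ → ℚ
  | _, 0 => 1
  | s, r + 1 => ((2 * r + s + 3).choose (r + 1) : ℚ) - (2 * r + s + 3).choose r

lemma tailSum_one (r : ℕ) : tailSum 1 (r + 1) 0 0 = ballot 0 r := by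
  have := tailSum_eq_of_recurrence (x := 1) (K := ballot) (fun _ => rfl) ?_ ?_ r 0 0
  · simpa using this
  · rintro (_ | r)
    · norm_num [ballot]
    · have h1 : (2 * r + 5).choose (r + 2) = (2 * r + 4).choose (r + 1) + (2 * r + 4).choose (r + 2) :=
        Nat.choose_succ_succ _ _
      have h2 : (2 * r + 4).choose (r + 2) = (2 * r + 3).choose (r + 1) + (2 * r + 3).choose (r + 2) :=
        Nat.choose_succ_succ _ _
      have h3 : (2 * r + 3).choose (r + 2) = (2 * r + 3).choose (r + 1) :=
        Nat.choose_symm_half (r + 1)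
      have h4 : (2 * r + 5).choose (r + 1) = (2 * r + 4).choose r + (2 * r + 4).choose (r + 1) :=
        Nat.choose_succ_succ _ _
      have h5 : (2 * r + 4).choose (r + 1) = (2 * r + 3).choose r + (2 * r + 3).choose (r + 1) :=
        Nat.choose_succ_succ _ _
      show ((2 * r + 5).choose (r + 2) : ℚ) - (2 * r + 5).choose (r + 1)
        = 1 * (((2 * r + 3).choose (r + 1) : ℚ) - (2 * r + 3).choose r)
          + (((2 * r + 4).choose (r + 1) : ℚ) - (2 * r + 4).choose r)
      rw [h1, h2, h3, h4, h5]
      push_cast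
      ring
  · rintro s (_ | r)
    · simp [ballot]
      ring
    · have h1 : (2 * r + s + 6).choose (r + 2)
          = (2 * r + s + 5).choose (r + 1) + (2 * r + s + 5).choose (r + 2) :=
        Nat.choose_succ_succ _ _
      have h2 : (2 * r + s + 6).choose (r + 1)
          = (2 * r + s + 5).choose r + (2 * r + s + 5).choose (r + 1) :=
        Nat.choose_succ_succ _ _
      simp only [ballot]
      rw [show 2 * (r + 1) + (s + 1) + 3 = 2 * r + s + 6 by ring,
        show 2 * (r + 1) + s + 3 = 2 * r + s + 5 by ring,
        show 2 * r + (s + 2) + 3 = 2 * r + s + 5 by ring, h1, h2]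
      push_cast
      ring

lemma two_mul_tailSum_two (r : ℕ) :
    2 * tailSum 2 (r + 1) 0 0 = ((r : ℚ) + 2) * catalan (r + 1) := by
  have h1 := succ_mul_catalan_eq_centralBinom (r + 1)
  have h2 : (r + 1).centralBinom = (2 * r + 1).choose r + (2 * r + 1).choose (r + 1) :=
    Nat.choose_succ_succ _ _
  rw [Nat.choose_symm_half] at h2
  rw [h2] at h1
  rw [tailSum_two]
  have h3 : ((r : ℚ) + 1 + 1) * catalan (r + 1)
      = (2 * r + 1).choose r + (2 * r + 1).choose r := by exact_mod_cast h1
  linear_combination -h3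

lemma tailSum_one_eq_catalan (r : ℕ) : tailSum 1 (r + 1) 0 0 = catalan (r + 1) := by
  rw [tailSum_one]
  have hc := two_mul_tailSum_two r
  rw [tailSum_two] at hc
  have hr : (r : ℚ) + 2 ≠ 0 := by positivity
  apply mul_left_cancel₀ hr
  rw [← hc]
  rcases r with _ | r
  · norm_num [ballot]
  · have h := Nat.choose_succ_right_eq (2 * r + 3) r
    rw [show 2 * r + 3 - r = r + 3 by omega] at h
    have h' : ((2 * r + 3).choose (r + 1) : ℚ) * (r + 1) = (2 * r + 3).choose r * (r + 3) := by
      exact_mod_cast h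
    show ((r + 1 : ℕ) + 2 : ℚ) * (((2 * r + 3).choose (r + 1) : ℚ) - (2 * r + 3).choose r)
      = 2 * (2 * r + 3).choose (r + 1)
    push_cast
    linear_combination h'

lemma cov_subset_of_isTT {n : ℕ} {l : List (ℕ × ℕ)} (h : IsTT n l) :
    cov l ⊆ Finset.Ioc 0 (n - 1) := by
  intro t ht
  obtain ⟨p, hp, ht⟩ := mem_cov.1 ht
  have := h.1 p hp
  rw [Finset.mem_Ioc]
  omega

lemma gaps_zero_of_isTT {n : ℕ} {l : List (ℕ × ℕ)} (h : IsTT n l) :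
    gaps n 0 l = n - wt l - 1 := by
  rw [gaps, Finset.card_sdiff_of_subset (cov_subset_of_isTT h), Nat.card_Ioc, wt]
  omega

lemma sum_Z_mul_pow (x : ℚ) {n : ℕ} (hn : 1 ≤ n) :
    ∑ m ∈ Finset.range n, x ^ (n - m - 1) * (Z n m : ℚ) = tailSum x n 0 0 := by
  classical
  have hmem (l : List (ℕ × ℕ)) : l ∈ (finite_tails n 0 0).toFinset ↔ IsTT n l := by
    rw [Set.Finite.mem_toFinset, isTT_iff_isTail]
    rfl
  rw [tailSum, finsum_mem_eq_finite_toFinset_sum _ (finite_tails n 0 0),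
    ← Finset.sum_fiberwise_of_maps_to (t := Finset.range n) (g := wt)]
  · refine Finset.sum_congr rfl fun m _ => ?_
    have hZ : Z n m = ((finite_tails n 0 0).toFinset.filter fun l => wt l = m).card := by
      rw [Z]
      refine Nat.subtype_card _ fun l => ?_
      rw [Finset.mem_filter, hmem]
    rw [hZ, mul_comm, ← nsmul_eq_mul, ← Finset.sum_const]
    refine Finset.sum_congr rfl fun l hl => ?_
    rw [Finset.mem_filter, hmem] at hl
    rw [gaps_zero_of_isTT hl.1, hl.2]
  · intro l hl
    have := Finset.card_le_card (cov_subset_of_isTT ((hmem l).1 hl))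
    rw [Nat.card_Ioc] at this
    rw [Finset.mem_range, wt]
    omega

lemma Z_zero (n : ℕ) : Z n 0 = 1 := by
  rw [Z, Nat.card_eq_one_iff_unique]
  have hnil (l : List (ℕ × ℕ)) (h : wt l = 0) : l = [] := by
    rcases l with _ | ⟨p, l⟩
    · rfl
    · rw [wt, Finset.card_eq_zero] at h
      have : p.1 ∈ cov (p :: l) := mem_cov.2 ⟨p, by simp, by omega⟩
      simp [h] at this
  refine ⟨⟨fun l l' => Subtype.ext ?_⟩, ⟨[], isTT_iff_isTail.2 (isTail_nil _ _ _), rfl⟩⟩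
  rw [hnil _ l.2.2, hnil _ l'.2.2]

theorem stmt9 (d n : ℕ) (hd : 1 ≤ d) (hn : 1 ≤ n) :
    ((2 : ℚ) ^ (n - 1) - 1) * (d : ℚ) ^ 2 - ((2 : ℚ) ^ (n - 1) - 2) * (d : ℚ)
      + ∑ m ∈ Finset.Icc 1 (n - 1),
          (((2 : ℚ) ^ (n - m - 1)) * (d : ℚ) ^ 2 - ((2 : ℚ) ^ (n - m - 1) - 1) * (d : ℚ))
            * (Z n m : ℚ)
      = (d : ℚ) * ((n : ℚ) * (d : ℚ) - (n : ℚ) + (d : ℚ) + 1) / 2 * (catalan n : ℚ)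
          - (d : ℚ) * ((d : ℚ) - 1) := by
  have hone := sum_Z_mul_pow 1 hn
  have htwo := sum_Z_mul_pow 2 hn
  obtain ⟨r, rfl⟩ : ∃ r, n = r + 1 := ⟨n - 1, by omega⟩
  have hcat := two_mul_tailSum_two r
  rw [tailSum_one_eq_catalan] at hone
  rw [← htwo] at hcat
  have hrange : Finset.range (r + 1) = insert 0 (Finset.Icc 1 (r + 1 - 1)) := by
    ext t
    simp only [Finset.mem_range, Finset.mem_insert, Finset.mem_Icc]
    omega
  rw [hrange, Finset.sum_insert (by simp), Z_zero] at hone hcat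
  have hsplit : ∑ m ∈ Finset.Icc 1 (r + 1 - 1),
        (((2 : ℚ) ^ (r + 1 - m - 1)) * (d : ℚ) ^ 2 - ((2 : ℚ) ^ (r + 1 - m - 1) - 1) * (d : ℚ))
          * (Z (r + 1) m : ℚ)
      = ((d : ℚ) ^ 2 - d) * ∑ m ∈ Finset.Icc 1 (r + 1 - 1),
          (2 : ℚ) ^ (r + 1 - m - 1) * (Z (r + 1) m : ℚ)
        + d * ∑ m ∈ Finset.Icc 1 (r + 1 - 1), (1 : ℚ) ^ (r + 1 - m - 1) * (Z (r + 1) m : ℚ) := by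
    rw [Finset.mul_sum, Finset.mul_sum, ← Finset.sum_add_distrib]
    refine Finset.sum_congr rfl fun m _ => ?_
    rw [one_pow]
    ring
  rw [hsplit]
  simp only [Nat.sub_zero, Nat.add_sub_cancel, one_pow, Nat.cast_one] at hone hcat ⊢
  push_cast
  linear_combination (((d : ℚ) ^ 2 - d) / 2) * hcat + (d : ℚ) * hone
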